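/- (Sparsity of the smoothed gate on binary configurations) Let m, k be positive integers and γ > 0. If α ∈ ℝ^k and Z ∈ ℝ^{k×m} are such that S(Z_{ij}) ∈ {0,1} for every i ∈ {1,…,k} and j ∈ {1,…,m}, then the DSelect-k gate output q̃(α,Z) = ∑_{i=1}^k σ(α)_i · r(S(z^{(i)})) has at most k nonzero entries: ‖q̃(α,Z)‖₀ ≤ k. -/

import Mathlib

/-!
At a binary point `z` the product `r(z)_i` vanishes unless the bits of `i` spell out `z`, so `r(z)`
has at most one nonzero entry. The gate output is a linear combination of `k` such vectors, and
`‖·‖₀` is subadditive and nonincreasing under scaling.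
-/

/-- The single expert selector: for `i : Fin (2^m)` (0-indexed, corresponding to the
paper's 1-indexed expert `i+1`), `r(z)_i = ∏_{j ∈ B(i)} z_j · ∏_{j ∉ B(i)} (1 - z_j)`,
where `B(i)` is the set of (0-indexed) nonzero bits of `i`. -/
def selector (m : ℕ) (z : Fin m → ℝ) (i : Fin (2 ^ m)) : ℝ :=
  ∏ j : Fin m, if Nat.testBit i.val j.val then z j else 1 - z j

/-- The smooth-step function with scaling parameter `γ`. -/
noncomputable def smoothStep (γ : ℝ) (t : ℝ) : ℝ :=
  if t ≤ -γ / 2 then 0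
  else if γ / 2 ≤ t then 1
  else -(2 / γ ^ 3) * t ^ 3 + 3 / (2 * γ) * t + 1 / 2

/-- The softmax function `σ(α)_i = exp(α_i) / ∑_j exp(α_j)`. -/
noncomputable def softmax {k : ℕ} (α : Fin k → ℝ) (i : Fin k) : ℝ :=
  Real.exp (α i) / ∑ j : Fin k, Real.exp (α j)

/-- `‖w‖₀`: the number of nonzero entries of `w`. -/
noncomputable def norm0 {n : ℕ} (w : Fin n → ℝ) : ℕ :=
  (Finset.univ.filter fun i => w i ≠ 0).card

/-- The DSelect-k gate `q̃(α, Z) = ∑_i σ(α)_i · r(S(z^(i)))`. -/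
noncomputable def dselect (m k : ℕ) (γ : ℝ) (α : Fin k → ℝ) (Z : Fin k → Fin m → ℝ)
    (i : Fin (2 ^ m)) : ℝ :=
  ∑ t : Fin k, softmax α t * selector m (fun j => smoothStep γ (Z t j)) i

theorem hammingNorm_add_le {ι : Type*} [Fintype ι] {β : ι → Type*} [∀ i, AddZeroClass (β i)]
    [∀ i, DecidableEq (β i)] (x y : ∀ i, β i) :
    hammingNorm (x + y) ≤ hammingNorm x + hammingNorm y := by
  classical
  refine (Finset.card_le_card fun i hi => ?_).trans (Finset.card_union_le _ _)
  simp only [Finset.mem_union, Finset.mem_filter_univ] at hi ⊢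
  contrapose! hi
  rw [Pi.add_apply, hi.1, hi.2, add_zero]

theorem hammingNorm_sum_le {ι κ : Type*} [Fintype ι] {β : ι → Type*} [∀ i, AddCommMonoid (β i)]
    [∀ i, DecidableEq (β i)] (s : Finset κ) (x : κ → ∀ i, β i) :
    hammingNorm (∑ t ∈ s, x t) ≤ ∑ t ∈ s, hammingNorm (x t) :=
  Finset.le_sum_of_subadditive (fun y : ∀ i, β i => hammingNorm y) hammingNorm_zero.le
    hammingNorm_add_le s x

theorem norm0_eq_hammingNorm {n : ℕ} (w : Fin n → ℝ) : norm0 w = hammingNorm w := rfl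

theorem eq_of_testBit_eq_of_lt_two_pow {m a b : ℕ} (ha : a < 2 ^ m) (hb : b < 2 ^ m)
    (hab : ∀ j < m, a.testBit j = b.testBit j) : a = b := by
  refine Nat.eq_of_testBit_eq fun j => ?_
  rcases lt_or_ge j m with hj | hj
  · exact hab j hj
  · have hpow : 2 ^ m ≤ 2 ^ j := Nat.pow_le_pow_right two_pos hj
    rw [Nat.testBit_lt_two_pow (ha.trans_le hpow), Nat.testBit_lt_two_pow (hb.trans_le hpow)]

theorem selector_ne_zero_iff {m : ℕ} {z : Fin m → ℝ} (hz : ∀ j, z j = 0 ∨ z j = 1)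
    {i : Fin (2 ^ m)} : selector m z i ≠ 0 ↔ ∀ j : Fin m, i.val.testBit j ↔ z j = 1 := by
  simp only [selector, Finset.prod_ne_zero_iff, Finset.mem_univ, true_implies]
  refine forall_congr' fun j => ?_
  rcases hz j with hj | hj <;> simp [hj]

theorem norm0_selector_le_one {m : ℕ} {z : Fin m → ℝ} (hz : ∀ j, z j = 0 ∨ z j = 1) :
    norm0 (selector m z) ≤ 1 := by
  refine Finset.card_le_one.mpr fun a ha b hb => ?_
  rw [Finset.mem_filter_univ, selector_ne_zero_iff hz] at ha hb
  exact Fin.ext (eq_of_testBit_eq_of_lt_two_pow a.isLt b.isLt fun j hj =>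
    Bool.eq_iff_iff.mpr ((ha ⟨j, hj⟩).trans (hb ⟨j, hj⟩).symm))

theorem dselect_eq_sum_smul (m k : ℕ) (γ : ℝ) (α : Fin k → ℝ) (Z : Fin k → Fin m → ℝ) :
    dselect m k γ α Z = ∑ t, softmax α t • selector m (fun j => smoothStep γ (Z t j)) := by
  ext i
  simp only [dselect, Finset.sum_apply, Pi.smul_apply, smul_eq_mul]

/-- sparsity of the smoothed gate on binary configurations: if every
entry of `S(Z)` is binary, then the DSelect-k gate output `q̃(α, Z)` has at most `k`
nonzero entries. -/
theorem dselect_sparse_of_binary (m k : ℕ) (hm : 0 < m) (hk : 0 < k) (γ : ℝ)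
    (hγ : 0 < γ) (α : Fin k → ℝ) (Z : Fin k → Fin m → ℝ)
    (hZ : ∀ i j, smoothStep γ (Z i j) = 0 ∨ smoothStep γ (Z i j) = 1) :
    norm0 (dselect m k γ α Z) ≤ k := by
  calc norm0 (dselect m k γ α Z)
      ≤ ∑ t, hammingNorm (softmax α t • selector m (fun j => smoothStep γ (Z t j))) := by
        rw [norm0_eq_hammingNorm, dselect_eq_sum_smul]
        exact hammingNorm_sum_le _ _
    _ ≤ ∑ t, norm0 (selector m (fun j => smoothStep γ (Z t j))) :=
        Finset.sum_le_sum fun _ _ => hammingNorm_smul_le_hammingNorm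
    _ ≤ ∑ _t : Fin k, 1 := Finset.sum_le_sum fun t _ => norm0_selector_le_one (hZ t)
    _ = k := by rw [Finset.sum_const, Finset.card_fin, smul_eq_mul, mul_one]
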